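/- arXiv:2010.10813 — 3 statements merged into one kernel-verified Lean document; each statement's English description precedes it below -/
import Mathlib

section
/- Let p : List Γ → ℝ and define B(u) := Σ_{g ∈ Seg(u)} Π_{s ∈ g} p(s) for u : List Γ, so that B([]) = 1. Then for every nonempty word u of length i ≥ 1, the backward recursion B(u) = Σ_{k=1}^{i} p(u.take k) · B(u.drop k) holds, i.e. the total segmentation weight of u equals the sum over the length k of the first segment of the weight of that segment times the weight of the remaining suffix. (The mirror recursion for b_{j,l} used in Algorithm 1.) -/
open scoped Classical

variable {Γ : Type*}

/-- A segmentation of a word `w` is a list of nonempty subwords whose concatenation is `w`. -/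
def Seg (w : List Γ) : Set (List (List Γ)) :=
  {g | (∀ s ∈ g, s ≠ []) ∧ g.flatten = w}

theorem Seg.finite (w : List Γ) : (Seg w).Finite := by
  apply Set.Finite.subset
    (Set.finite_range fun c : Composition w.length => w.splitWrtComposition c)
  rintro g ⟨hne, hjoin⟩
  subst hjoin
  have hpos : ∀ {i : ℕ}, i ∈ g.map List.length → 0 < i := by
    intro i hi
    simp only [List.mem_map] at hi
    obtain ⟨s, hs, rfl⟩ := hi
    exact List.length_pos_iff.mpr (hne s hs)
  refine ⟨⟨g.map List.length, hpos, by simp⟩, ?_⟩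
  exact (List.splitWrtComposition_flatten g ⟨g.map List.length, hpos, by simp⟩ rfl)

/-- The (finite) set of segmentations of `w`, as a `Finset`. -/
noncomputable def SegF (w : List Γ) : Finset (List (List Γ)) := (Seg.finite w).toFinset

/-- Total segmentation weight `B(u) = Σ_{g ∈ Seg(u)} Π_{s ∈ g} p(s)`. -/
noncomputable def B (p : List Γ → ℝ) (u : List Γ) : ℝ :=
  ∑ g ∈ SegF u, (g.map p).prod

theorem mem_segF {w : List Γ} {g : List (List Γ)} :
    g ∈ SegF w ↔ (∀ s ∈ g, s ≠ []) ∧ g.flatten = w := by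
  simp only [SegF, Set.Finite.mem_toFinset, Seg, Set.mem_ofPred_eq]

theorem nil_mem_segF {w : List Γ} : [] ∈ SegF w ↔ w = [] := by
  simp [mem_segF, eq_comm]

theorem cons_mem_segF {w s : List Γ} {g : List (List Γ)} :
    s :: g ∈ SegF w ↔ s ≠ [] ∧ s <+: w ∧ g ∈ SegF (w.drop s.length) := by
  simp only [mem_segF, List.forall_mem_cons, List.flatten_cons]
  constructor
  · rintro ⟨⟨hs, hg⟩, rfl⟩
    exact ⟨hs, List.prefix_append s _, hg, List.drop_left.symm⟩
  · rintro ⟨hs, hsw, hg, hflat⟩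
    exact ⟨⟨hs, hg⟩, hflat ▸ List.prefix_iff_eq_append.mp hsw⟩

theorem segF_eq_biUnion_image_cons {w : List Γ} (hw : w ≠ []) :
    SegF w = (Finset.Icc 1 w.length).biUnion
      fun k => (SegF (w.drop k)).image (List.cons (w.take k)) := by
  ext g
  simp only [Finset.mem_biUnion, Finset.mem_image, Finset.mem_Icc]
  cases g with
  | nil => simp [nil_mem_segF, hw]
  | cons s g =>
    simp only [List.cons.injEq, cons_mem_segF]
    constructor
    · rintro ⟨hs, hsw, hg⟩
      exact ⟨s.length, ⟨List.length_pos_iff.mpr hs, hsw.length_le⟩, g, hg,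
        (List.prefix_iff_eq_take.mp hsw).symm, rfl⟩
    · rintro ⟨k, ⟨hk, hkw⟩, g, hg, rfl, rfl⟩
      have hlen : (w.take k).length = k := List.length_take_of_le hkw
      exact ⟨List.ne_nil_of_length_pos (by rwa [hlen]), List.take_prefix k w, by rwa [hlen]⟩

theorem take_injOn_Iic_length (w : List Γ) :
    Set.InjOn (fun k => w.take k) (Set.Iic w.length) := by
  intro k hk l hl h
  simpa only [List.length_take_of_le hk, List.length_take_of_le hl] using congrArg List.length h

theorem pairwiseDisjoint_image_cons_take (w : List Γ) (S : ℕ → Finset (List (List Γ))) :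
    (Set.Iic w.length).PairwiseDisjoint fun k => (S k).image (List.cons (w.take k)) := by
  intro k hk l hl hkl
  simp only [Function.onFun, Finset.disjoint_left, Finset.mem_image]
  rintro _ ⟨g, -, rfl⟩ ⟨g', -, h⟩
  exact hkl (take_injOn_Iic_length w hk hl (List.cons.inj h).1.symm)

theorem sum_segF_eq_sum_sum_cons {M : Type*} [AddCommMonoid M] (f : List (List Γ) → M)
    {w : List Γ} (hw : w ≠ []) :
    ∑ g ∈ SegF w, f g =
      ∑ k ∈ Finset.Icc 1 w.length, ∑ g ∈ SegF (w.drop k), f (w.take k :: g) := by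
  have hdisj : (Finset.Icc 1 w.length : Set ℕ).PairwiseDisjoint
      fun k => (SegF (w.drop k)).image (List.cons (w.take k)) :=
    (pairwiseDisjoint_image_cons_take w _).subset fun _ hk => (Finset.mem_Icc.mp hk).2
  rw [segF_eq_biUnion_image_cons hw, Finset.sum_biUnion hdisj]
  exact Finset.sum_congr rfl fun k _ => Finset.sum_image List.cons_injective.injOn

/-- Backward recursion for the total segmentation weight (mirror of Eq. (9)). -/
theorem B_backward_recursion (p : List Γ → ℝ) (u : List Γ) (hu : u ≠ []) :
    B p u = ∑ k ∈ Finset.Icc 1 u.length, p (u.take k) * B p (u.drop k) := by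
  calc B p u
    _ = ∑ k ∈ Finset.Icc 1 u.length, ∑ g ∈ SegF (u.drop k), ((u.take k :: g).map p).prod :=
        sum_segF_eq_sum_sum_cons (fun g => (g.map p).prod) hu
    _ = ∑ k ∈ Finset.Icc 1 u.length, p (u.take k) * B p (u.drop k) := by
        simp only [List.map_cons, List.prod_cons, B, Finset.mul_sum]
end

section
/- Let p : List Γ → ℝ, let w : List Γ have length l, and let 0 ≤ i < j ≤ l. Then the sum, over all segmentations g of w that contain the substring w[i+1:j] as a single segment with cuts exactly at positions i and j, of the product Π_{s ∈ g} p(s), equals p(w[i+1:j]) · B(w.take i) · B(w.drop j). (The unnormalized subword-weight formula ã = p_s · b_{1,i−1} · b_{j+1,l} of Section 3.2.) -/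
open scoped Classical

variable {Γ : Type*}

/-!
Segments are nonempty, so no segmentation of `u` is a proper prefix of another one. Hence a
segmentation of `u ++ s ++ v` of the form `g₁ ++ m ++ g₂`, with `m` a fixed segmentation of `s`,
determines the segmentations `g₁` of `u` and `g₂` of `v`, which can be chosen independently. The sum
of weights therefore runs over a product set, and it factors because the weight is multiplicative.
-/

theorem mem_segF_s6 {u : List Γ} {g : List (List Γ)} : g ∈ SegF u ↔ g ∈ Seg u :=
  (Seg.finite u).mem_toFinset

namespace Seg

variable {u s v : List Γ} {g h m : List (List Γ)}

theorem singleton_mem (hs : s ≠ []) : [s] ∈ Seg s := by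
  simp [Seg, hs]

theorem append_mem (hg : g ∈ Seg u) (hh : h ∈ Seg v) : g ++ h ∈ Seg (u ++ v) :=
  ⟨List.forall_mem_append.mpr ⟨hg.1, hh.1⟩, by rw [List.flatten_append, hg.2, hh.2]⟩

theorem eq_of_prefix (hg : g ∈ Seg u) (hh : h ∈ Seg u) (hgh : g <+: h) : g = h := by
  obtain ⟨a, rfl⟩ := hgh
  have ha : a.flatten = [] := by
    simpa only [List.flatten_append, hg.2, List.append_right_eq_self] using hh.2
  have ha_nil : a = [] := List.eq_nil_iff_forall_not_mem.mpr fun t ht ↦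
    hh.1 t (List.mem_append_right g ht) (List.flatten_eq_nil_iff.mp ha t ht)
  rw [ha_nil, List.append_nil]

theorem append_inj {a b : List (List Γ)} (hg : g ∈ Seg u) (hh : h ∈ Seg u)
    (hab : g ++ a = h ++ b) : g = h ∧ a = b := by
  have hgh : g = h :=
    (List.prefix_or_prefix_of_prefix (List.prefix_append g a) (hab ▸ List.prefix_append h b)).elim
      (eq_of_prefix hg hh) fun hhg ↦ (eq_of_prefix hh hg hhg).symm
  subst hgh
  exact ⟨rfl, List.append_cancel_left hab⟩

theorem injOn_append_append (u : List Γ) (m : List (List Γ)) (t : Set (List (List Γ))) :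
    Set.InjOn (fun x : List (List Γ) × List (List Γ) ↦ x.1 ++ m ++ x.2) (Seg u ×ˢ t) := by
  rintro ⟨g₁, g₂⟩ hg ⟨h₁, h₂⟩ hh heq
  simp only [List.append_assoc] at heq
  obtain ⟨hfst, hsnd⟩ := append_inj hg.1 hh.1 heq
  exact Prod.ext hfst (List.append_cancel_left hsnd)

end Seg

theorem filter_segF_append_append {s : List Γ} {m : List (List Γ)} (hm : m ∈ Seg s)
    (u v : List Γ) :
    (SegF (u ++ s ++ v)).filter (fun g ↦ ∃ g₁ ∈ Seg u, ∃ g₂ ∈ Seg v, g = g₁ ++ m ++ g₂)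
      = (SegF u ×ˢ SegF v).image (fun x ↦ x.1 ++ m ++ x.2) := by
  ext g
  simp only [Finset.mem_filter, Finset.mem_image, Finset.mem_product, Prod.exists, mem_segF_s6]
  constructor
  · rintro ⟨-, g₁, hg₁, g₂, hg₂, rfl⟩
    exact ⟨g₁, g₂, ⟨hg₁, hg₂⟩, rfl⟩
  · rintro ⟨g₁, g₂, ⟨hg₁, hg₂⟩, rfl⟩
    exact ⟨Seg.append_mem (Seg.append_mem hg₁ hm) hg₂, g₁, hg₁, g₂, hg₂, rfl⟩

section Semiring

variable {R : Type*} [Semiring R]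

theorem sum_filter_segF_append_append (p : List Γ → R) {s : List Γ} {m : List (List Γ)}
    (hm : m ∈ Seg s) (u v : List Γ) :
    ∑ g ∈ (SegF (u ++ s ++ v)).filter (fun g ↦ ∃ g₁ ∈ Seg u, ∃ g₂ ∈ Seg v, g = g₁ ++ m ++ g₂),
        (g.map p).prod
      = (∑ g ∈ SegF u, (g.map p).prod) * (m.map p).prod * ∑ g ∈ SegF v, (g.map p).prod := by
  have hinj : Set.InjOn (fun x : List (List Γ) × List (List Γ) ↦ x.1 ++ m ++ x.2)
      (SegF u ×ˢ SegF v : Finset _) :=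
    (Seg.injOn_append_append u m (Seg v)).mono fun x hx ↦
      (Finset.mem_product.mp hx).imp mem_segF_s6.mp mem_segF_s6.mp
  rw [filter_segF_append_append hm, Finset.sum_image hinj, Finset.sum_mul, Finset.sum_mul_sum,
    ← Finset.sum_product']
  simp only [List.map_append, List.prod_append]

theorem sum_through_edge_general (p : List Γ → R) (w : List Γ) (i j : ℕ)
    (hij : i < j) (hj : j ≤ w.length) :
    ∑ g ∈ (SegF w).filter (fun g ↦ ∃ g₁ ∈ Seg (w.take i), ∃ g₂ ∈ Seg (w.drop j),
        g = g₁ ++ [(w.drop i).take (j - i)] ++ g₂), (g.map p).prod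
      = (∑ g ∈ SegF (w.take i), (g.map p).prod) * p ((w.drop i).take (j - i))
        * ∑ g ∈ SegF (w.drop j), (g.map p).prod := by
  have hsplit : w.take i ++ (w.drop i).take (j - i) ++ w.drop j = w := by
    rw [← List.take_add, Nat.add_sub_of_le hij.le, List.take_append_drop]
  have hne : (w.drop i).take (j - i) ≠ [] := by
    rw [← List.length_pos_iff, List.length_take, List.length_drop]
    omega
  simpa only [hsplit, List.map_singleton, List.prod_singleton] using
    sum_filter_segF_append_append p (Seg.singleton_mem hne) (w.take i) (w.drop j)

end Semiring

/-- The unnormalized subword-weight formula `ã = p_s · b_{1,i−1} · b_{j+1,l}`: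
the total weight of segmentations of `w` passing through the edge `(i, j)`
equals `p (w[i+1:j]) * B (w.take i) * B (w.drop j)`. -/
theorem sum_through_edge (p : List Γ → ℝ) (w : List Γ) (i j : ℕ)
    (hij : i < j) (hj : j ≤ w.length) :
    ∑ g ∈ (SegF w).filter (fun g => ∃ g₁ ∈ Seg (w.take i), ∃ g₂ ∈ Seg (w.drop j),
        g = g₁ ++ [(w.drop i).take (j - i)] ++ g₂), (g.map p).prod
      = p ((w.drop i).take (j - i)) * B p (w.take i) * B p (w.drop j) := by
  rw [sum_through_edge_general p w i j hij hj, mul_comm (p _), B, B]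
end

section
/- Let M be a module over ℝ, let v : List Γ → M, let p : List Γ → ℝ, and let w : List Γ have length l. Then Σ_{g ∈ Seg(w)} (Π_{s ∈ g} p(s)) • (Σ_{s ∈ g} v(s)) = Σ_{0 ≤ i < j ≤ l} (p(w[i+1:j]) · B(w.take i) · B(w.drop j)) • v(w[i+1:j]), where the inner sum Σ_{s ∈ g} v(s) runs over the entries of g with multiplicity. That is, the expectation over segmentations of the bag-of-subwords vector equals the weighted sum of subword-occurrence vectors with the weights ã computed by Algorithm 1. (Equations (6)–(8): correctness of the alternative weighted-subword view of PBoS.) -/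
open scoped Classical

variable {Γ : Type*}

/-!
Both sides are sums over the segmentations `g = a ++ s :: b` of `w` with one marked entry `s`.
If `s` occupies `w.extract i j`, then `a` and `b` are arbitrary segmentations of `w.take i` and
`w.drop j`, and the weight of `g` is the product of the weights of `a`, `s` and `b`. Summing over
`a` and `b` with `i` and `j` fixed therefore produces the two factors `B`.
-/

section Segmentations

variable {w : List Γ} {g a b : List (List Γ)} {i j k : ℕ}

theorem mem_SegF : g ∈ SegF w ↔ (∀ s ∈ g, s ≠ []) ∧ g.flatten = w :=
  (Seg.finite w).mem_toFinset

/-- The position in `g.flatten` at which the `k`-th entry of `g` begins, counting from `0`. -/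
def cut (g : List (List Γ)) (k : ℕ) : ℕ :=
  ((g.map List.length).take k).sum

theorem cut_succ (hk : k < g.length) : cut g (k + 1) = cut g k + g[k].length := by
  rw [cut, List.sum_take_succ _ _ (by simpa using hk), List.getElem_map, cut]

theorem cut_append_length (a b : List (List Γ)) : cut (a ++ b) a.length = a.flatten.length := by
  rw [cut, ← List.map_take, List.take_left, List.length_flatten]

theorem cut_le_length (hg : g ∈ SegF w) (k : ℕ) : cut g k ≤ w.length := by
  rw [← (mem_SegF.1 hg).2, List.length_flatten]
  exact (List.take_sublist k _).sum_le_sum fun _ _ => Nat.zero_le _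

theorem cut_lt_cut_succ (hg : g ∈ SegF w) (hk : k < g.length) : cut g k < cut g (k + 1) := by
  rw [cut_succ hk]
  exact Nat.lt_add_of_pos_right
    (List.length_pos_of_ne_nil ((mem_SegF.1 hg).1 _ (List.getElem_mem hk)))

theorem take_mem_SegF (hg : g ∈ SegF w) (k : ℕ) : g.take k ∈ SegF (w.take (cut g k)) := by
  obtain ⟨hne, rfl⟩ := mem_SegF.1 hg
  exact mem_SegF.2 ⟨fun s hs => hne s (List.mem_of_mem_take hs), (List.take_sum_flatten g k).symm⟩

theorem drop_mem_SegF (hg : g ∈ SegF w) (k : ℕ) : g.drop k ∈ SegF (w.drop (cut g k)) := by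
  obtain ⟨hne, rfl⟩ := mem_SegF.1 hg
  exact mem_SegF.2 ⟨fun s hs => hne s (List.mem_of_mem_drop hs), (List.drop_sum_flatten g k).symm⟩

theorem extract_cut_cut_succ (hg : g ∈ SegF w) (hk : k < g.length) :
    w.extract (cut g k) (cut g (k + 1)) = g[k] := by
  rw [← (mem_SegF.1 hg).2, List.extract_eq_drop_take']
  exact List.drop_take_succ_flatten_eq_getElem g k hk

theorem take_append_extract_cons_drop (hg : g ∈ SegF w) (hk : k < g.length) :
    g.take k ++ w.extract (cut g k) (cut g (k + 1)) :: g.drop (k + 1) = g := by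
  rw [extract_cut_cut_succ hg hk, List.getElem_cons_drop, List.take_append_drop]

theorem append_cons_extract_mem_SegF (hij : i < j) (hj : j ≤ w.length)
    (ha : a ∈ SegF (w.take i)) (hb : b ∈ SegF (w.drop j)) :
    a ++ w.extract i j :: b ∈ SegF w := by
  obtain ⟨ha_ne, ha_flatten⟩ := mem_SegF.1 ha
  obtain ⟨hb_ne, hb_flatten⟩ := mem_SegF.1 hb
  have hs_ne : w.extract i j ≠ [] := List.ne_nil_of_length_pos (by simp; omega)
  have hs_append : w.extract i j ++ w.drop j = w.drop i := by
    rw [← List.take_append_drop (j - i) (w.drop i), List.drop_drop, Nat.add_sub_cancel' hij.le]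
  refine mem_SegF.2 ⟨List.forall_mem_append.2 ⟨ha_ne, List.forall_mem_cons.2 ⟨hs_ne, hb_ne⟩⟩, ?_⟩
  rw [List.flatten_append, List.flatten_cons, ha_flatten, hb_flatten, hs_append,
    List.take_append_drop]

theorem cut_append_of_mem_SegF_take (hi : i ≤ w.length) (ha : a ∈ SegF (w.take i))
    (b : List (List Γ)) : cut (a ++ b) a.length = i := by
  rw [cut_append_length, (mem_SegF.1 ha).2, List.length_take_of_le hi]

theorem cut_append_cons_extract_succ (hij : i ≤ j) (hj : j ≤ w.length)
    (ha : a ∈ SegF (w.take i)) (b : List (List Γ)) :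
    cut (a ++ w.extract i j :: b) (a.length + 1) = j := by
  rw [cut_succ (by simp), cut_append_of_mem_SegF_take (hij.trans hj) ha,
    List.getElem_of_append rfl rfl, List.length_take, List.length_drop]
  omega

end Segmentations

/-- The pairs `(i, j)` that index the occurrences of nonempty subwords in a word `w` of length `n`:
the subword at `(i, j)` is `w.extract i j`, which the paper writes `w[i+1:j]`. -/
def occurrences (n : ℕ) : Finset (ℕ × ℕ) :=
  (Finset.range (n + 1) ×ˢ Finset.range (n + 1)).filter fun q => q.1 < q.2

theorem mem_occurrences {n : ℕ} {q : ℕ × ℕ} : q ∈ occurrences n ↔ q.1 < q.2 ∧ q.2 ≤ n := by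
  simp only [occurrences, Finset.mem_filter, Finset.mem_product, Finset.mem_range]
  omega

theorem sum_SegF_sum_entries_eq_sum_occurrences {N : Type*} [AddCommMonoid N] (w : List Γ)
    (F : List (List Γ) → List Γ → List (List Γ) → N) :
    ∑ g ∈ SegF w, ∑ k : Fin g.length, F (g.take k) g[k] (g.drop (k + 1))
      = ∑ q ∈ occurrences w.length, ∑ a ∈ SegF (w.take q.1), ∑ b ∈ SegF (w.drop q.2),
          F a (w.extract q.1 q.2) b := by
  simp only [← Finset.sum_product']
  rw [Finset.sum_sigma', Finset.sum_sigma']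
  refine Finset.sum_nbij'
    (fun x => ⟨(cut x.1 x.2, cut x.1 (x.2 + 1)), (x.1.take x.2, x.1.drop (x.2 + 1))⟩)
    (fun y => ⟨y.2.1 ++ w.extract y.1.1 y.1.2 :: y.2.2, ⟨y.2.1.length, by simp⟩⟩)
    ?_ ?_ ?_ ?_ ?_
  · rintro ⟨g, k⟩ h
    have hg : g ∈ SegF w := (Finset.mem_sigma.1 h).1
    exact Finset.mem_sigma.2 ⟨mem_occurrences.2 ⟨cut_lt_cut_succ hg k.2, cut_le_length hg _⟩,
      Finset.mem_product.2 ⟨take_mem_SegF hg _, drop_mem_SegF hg _⟩⟩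
  · rintro ⟨⟨i, j⟩, a, b⟩ h
    simp only [Finset.mem_sigma, mem_occurrences, Finset.mem_product] at h
    obtain ⟨⟨hij, hj⟩, ha, hb⟩ := h
    exact Finset.mem_sigma.2 ⟨append_cons_extract_mem_SegF hij hj ha hb, Finset.mem_univ _⟩
  · rintro ⟨g, k⟩ h
    have hg : g ∈ SegF w := (Finset.mem_sigma.1 h).1
    have hg_eq := take_append_extract_cons_drop hg k.2
    exact Sigma.ext hg_eq ((Fin.heq_ext_iff (congrArg List.length hg_eq)).2
      (List.length_take_of_le k.2.le))
  · rintro ⟨⟨i, j⟩, a, b⟩ h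
    simp only [Finset.mem_sigma, mem_occurrences, Finset.mem_product] at h
    obtain ⟨⟨hij, hj⟩, ha, -⟩ := h
    have hb_drop : (a ++ w.extract i j :: b).drop (a.length + 1) = b := by simp
    simp only [cut_append_of_mem_SegF_take (hij.le.trans hj) ha,
      cut_append_cons_extract_succ hij.le hj ha, List.take_left, hb_drop]
  · rintro ⟨g, k⟩ h
    have hg : g ∈ SegF w := (Finset.mem_sigma.1 h).1
    simp only [extract_cut_cut_succ hg k.2, Fin.getElem_fin]

theorem prod_map_eq_mul_getElem_mul {α N : Type*} [Monoid N] (f : α → N) {l : List α} {k : ℕ}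
    (hk : k < l.length) :
    (l.map f).prod = ((l.take k).map f).prod * f l[k] * ((l.drop (k + 1)).map f).prod := by
  rw [mul_assoc, ← List.prod_cons, ← List.map_cons, List.getElem_cons_drop, ← List.prod_append,
    ← List.map_append, List.take_append_drop]

section Weights

variable {R M : Type*} [Semiring R] [AddCommMonoid M] [Module R M]

/-- The total weight `B` with weights in an arbitrary semiring. -/
noncomputable def segWeight (p : List Γ → R) (u : List Γ) : R :=
  ∑ g ∈ SegF u, (g.map p).prod

theorem prod_map_smul_sum_map (p : List Γ → R) (v : List Γ → M) (g : List (List Γ)) :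
    (g.map p).prod • (g.map v).sum = ∑ k : Fin g.length,
      (((g.take k).map p).prod * p g[k] * ((g.drop (k + 1)).map p).prod) • v g[k] := by
  rw [← Fin.sum_univ_fun_getElem, Finset.smul_sum]
  exact Finset.sum_congr rfl fun k _ => congrArg (· • v g[k]) (prod_map_eq_mul_getElem_mul p k.2)

theorem segWeight_mul_mul_segWeight_smul (p : List Γ → R) (c : R) (x y : List Γ) (m : M) :
    (segWeight p x * c * segWeight p y) • m
      = ∑ a ∈ SegF x, ∑ b ∈ SegF y, ((a.map p).prod * c * (b.map p).prod) • m := by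
  rw [segWeight, segWeight, Finset.sum_mul, Finset.sum_mul_sum, Finset.sum_smul]
  simp only [Finset.sum_smul]

theorem pbos_weighted_subword_view_general (v : List Γ → M) (p : List Γ → R) (w : List Γ) :
    ∑ g ∈ SegF w, (g.map p).prod • (g.map v).sum
      = ∑ q ∈ occurrences w.length,
          (segWeight p (w.take q.1) * p (w.extract q.1 q.2) * segWeight p (w.drop q.2)) •
            v (w.extract q.1 q.2) := by
  simp only [prod_map_smul_sum_map, segWeight_mul_mul_segWeight_smul]
  exact sum_SegF_sum_entries_eq_sum_occurrences w
    fun a s b => ((a.map p).prod * p s * (b.map p).prod) • v s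

end Weights

/-- Equations (6)–(8): the expectation over segmentations of the bag-of-subwords
vector equals the weighted sum of subword-occurrence vectors with the weights
`ã` computed by Algorithm 1. -/
theorem pbos_weighted_subword_view {M : Type*} [AddCommMonoid M] [Module ℝ M]
    (v : List Γ → M) (p : List Γ → ℝ) (w : List Γ) :
    ∑ g ∈ SegF w, (g.map p).prod • (g.map v).sum
      = ∑ q ∈ (Finset.range (w.length + 1) ×ˢ Finset.range (w.length + 1)).filter
          (fun q => q.1 < q.2),
          (p ((w.drop q.1).take (q.2 - q.1)) * B p (w.take q.1) * B p (w.drop q.2)) •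
            v ((w.drop q.1).take (q.2 - q.1)) := by
  simp only [mul_comm (p _) (B p _)]
  exact pbos_weighted_subword_view_general v p w
end
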